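/- There is a universal constant c > 0 and a randomized algorithm for bandit convex optimization, using exactly three loss-value queries per round (the played point plus two additional queried points, with the additional points of the form A(t) and A(t)+δ_t·u for δ_t = 1/(κT) and u a uniformly random unit vector), such that for every contiguous interval I = [j,s] ⊆ [T], the expected adaptive regret satisfies E[Σ_{t∈I} ℓ_t(x_t)] − min_{x∈K} Σ_{t∈I} ℓ_t(x) ≤ c · d·G·D·√|I| · (log T)². -/

import Mathlib

open MeasureTheory

/-- One round of interaction in the three-query BCO model is recorded as
`(x, y, u, ℓ x, ℓ y, ℓ (y + δ u))`: the played point, the base query point, the unit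
perturbation direction, and the three observed loss values. -/
abbrev BCORecord (d : ℕ) :=
  EuclideanSpace ℝ (Fin d) × EuclideanSpace ℝ (Fin d) × EuclideanSpace ℝ (Fin d) × ℝ × ℝ × ℝ

/-- A randomized three-query BCO algorithm on domain `K`: an internal probability space
`(Ω, μ)` together with a map sending each interaction history (and the internal
randomness) to the played point `x ∈ K`, a base query point `y` and a unit direction
`u`; the three loss values queried at round `t` are `ℓ t x`, `ℓ t y` and
`ℓ t (y + δ • u)`, all chosen before `ℓ t` is revealed. -/
structure BCOAlg3 (d : ℕ) (K : Set (EuclideanSpace ℝ (Fin d))) where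
  Ω : Type
  inst : MeasurableSpace Ω
  μ : @Measure Ω inst
  prob : @IsProbabilityMeasure Ω inst μ
  act : List (BCORecord d) → Ω →
    EuclideanSpace ℝ (Fin d) × EuclideanSpace ℝ (Fin d) × EuclideanSpace ℝ (Fin d)
  play_mem : ∀ h ω, (act h ω).1 ∈ K
  unit_dir : ∀ h ω, ‖(act h ω).2.2‖ = 1

attribute [instance] BCOAlg3.inst BCOAlg3.prob

/-- The interaction history of a three-query BCO algorithm after `t` rounds against the
oblivious loss sequence `ℓ`, with perturbation radius `δ`. -/
noncomputable def bcoHist3 {d : ℕ} {K : Set (EuclideanSpace ℝ (Fin d))}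
    (A : BCOAlg3 d K) (δ : ℝ) (ℓ : ℕ → EuclideanSpace ℝ (Fin d) → ℝ) :
    ℕ → A.Ω → List (BCORecord d)
  | 0, _ => []
  | t + 1, ω =>
      let h := bcoHist3 A δ ℓ t ω
      let a := A.act h ω
      h ++ [(a.1, a.2.1, a.2.2, ℓ t a.1, ℓ t a.2.1, ℓ t (a.2.1 + δ • a.2.2))]

/-- The point played at round `t`. -/
noncomputable def bcoPlay3 {d : ℕ} {K : Set (EuclideanSpace ℝ (Fin d))}
    (A : BCOAlg3 d K) (δ : ℝ) (ℓ : ℕ → EuclideanSpace ℝ (Fin d) → ℝ)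
    (t : ℕ) (ω : A.Ω) : EuclideanSpace ℝ (Fin d) :=
  (A.act (bcoHist3 A δ ℓ t ω) ω).1

/-!
A learner that sees only vectors `g t` with `‖g t‖ ≤ L` can keep `∑ ⟪g t, w t - y⟫` of order
`L D √|I| log T` on every interval `I`: run projected gradient descent with a step size tuned to
each possible interval length and combine these experts by exponential weights with a fixed share,
so that an expert good on `I` recovers weight at the start of `I`.

For bandit feedback, `g t` is `d` times a difference quotient in a random coordinate direction,
computed from the losses at the played point and at the base query. Such quotients need not be
close to subgradients at any single point, but for convex losses the discrepancy is a second
difference. The played point is a random point of a small lattice box next to `w t`; along lattice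
lines second differences telescope, so on average the discrepancy is of order `1 / T`. The whole
box fits inside the domain because `w t` is first moved a fraction `1 / T` of the way to an
interior point.

The spacing of the lattice must be small compared with the domain, whereas the step `δ` of the third
query need not be, so the estimate does not use the third value.
-/

open Finset
open scoped BigOperators NNReal RealInnerProductSpace fwdDiff

section Subgradient

/-- The continuous linear functional `s` is a subgradient of `f` at `p`. -/
def IsSubgradientAt {E : Type*} [AddCommGroup E] [Module ℝ E] [TopologicalSpace E]
    (f : E → ℝ) (s : StrongDual ℝ E) (p : E) : Prop :=
  ∀ z, f p + s (z - p) ≤ f z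

theorem exists_isSubgradientAt {E : Type*} [AddCommGroup E] [Module ℝ E] [TopologicalSpace E]
    [IsTopologicalAddGroup E] [ContinuousSMul ℝ E] {f : E → ℝ} (hf : ConvexOn ℝ Set.univ f)
    (hcont : Continuous f) (p : E) : ∃ s, IsSubgradientAt f s p := by
  have hopen : IsOpen {q : E × ℝ | q.1 ∈ Set.univ ∧ f q.1 < q.2} := by
    simpa using isOpen_lt (hcont.comp continuous_fst) continuous_snd
  obtain ⟨φ, hφ⟩ := geometric_hahn_banach_open_point hf.convex_strict_epigraph hopen
    (x := (p, f p)) (by simp)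
  set β := φ (0, 1)
  have hsplit (z : E) (a : ℝ) : φ (z, a) = φ (z, 0) + a * β := by
    rw [← smul_eq_mul, ← map_smul, ← map_add]
    simp
  have habove {z : E} {a : ℝ} (h : f z < a) : φ (z, 0) + a * β < φ (p, 0) + f p * β := by
    rw [← hsplit, ← hsplit]
    exact hφ _ ⟨Set.mem_univ z, h⟩
  have hβ : β < 0 := by linarith [habove (lt_add_one (f p))]
  have hgraph (z : E) : φ (z, 0) + f z * β ≤ φ (p, 0) + f p * β :=
    ContinuousWithinAt.closure_le (s := Set.Ioi (f z)) (f := fun a => φ (z, 0) + a * β) (by simp)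
      (by fun_prop) continuousWithinAt_const fun _ ha => (habove ha).le
  refine ⟨(-β)⁻¹ • φ.comp (ContinuousLinearMap.inl ℝ E ℝ), fun z => ?_⟩
  have hslope : (-β)⁻¹ * (φ (z, 0) - φ (p, 0)) ≤ f z - f p := by
    rw [inv_mul_le_iff₀ (neg_pos.2 hβ)]
    linarith [hgraph z]
  have hdiff : φ (z - p, 0) = φ (z, 0) - φ (p, 0) := by
    rw [← map_sub, Prod.mk_sub_mk, sub_zero]
  simp only [smul_apply, ContinuousLinearMap.comp_apply,
    ContinuousLinearMap.inl_apply, smul_eq_mul, hdiff]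
  linarith

theorem abs_fwdDiff_le {E : Type*} [SeminormedAddCommGroup E] {f : E → ℝ} {G : ℝ≥0}
    (hG : LipschitzWith G f) (h p : E) : |Δ_[h] f p| ≤ G * ‖h‖ := by
  simpa [Real.dist_eq, fwdDiff] using hG.dist_le_mul (p + h) p

section IsSubgradientAt

variable {E : Type*} [AddCommGroup E] [Module ℝ E] [TopologicalSpace E] {f : E → ℝ}
  {s : StrongDual ℝ E} {p : E}

theorem IsSubgradientAt.apply_le_fwdDiff (hs : IsSubgradientAt f s p) (h : E) :
    s h ≤ Δ_[h] f p := by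
  have := hs (p + h)
  rw [add_sub_cancel_left] at this
  exact le_sub_iff_add_le'.2 this

theorem IsSubgradientAt.fwdDiff_sub_le_apply (hs : IsSubgradientAt f s p) (h : E) :
    Δ_[h] f (p - h) ≤ s h := by
  have := hs (p - h)
  rw [sub_sub_cancel_left, map_neg] at this
  rw [fwdDiff, sub_add_cancel]
  linarith

end IsSubgradientAt

variable {E : Type*} [NormedAddCommGroup E] [NormedSpace ℝ E] {f : E → ℝ} {G : ℝ≥0}

/-- The error of replacing a subgradient by forward differences is controlled by second
differences, since convexity places `s (h i)` between the backward and the forward difference. -/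
theorem sub_sub_sum_mul_fwdDiff_le {ι : Type*} [Fintype ι] {h : ι → E} {c : ι → ℝ} {w y : E}
    (hf : ConvexOn ℝ Set.univ f) (hG : LipschitzWith G f) (hwy : w - y = ∑ i, c i • h i) (p : E) :
    f p - f y - ∑ i, c i * Δ_[h i] f p
      ≤ G * ‖p - w‖ + ∑ i, |c i| * (Δ_[h i] f p - Δ_[h i] f (p - h i)) := by
  obtain ⟨s, hs⟩ := exists_isSubgradientAt hf hG.continuous p
  have hterm (i : ι) : c i * s (h i) - c i * Δ_[h i] f p
      ≤ |c i| * (Δ_[h i] f p - Δ_[h i] f (p - h i)) := by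
    have hle := hs.apply_le_fwdDiff (h i)
    have hge := hs.fwdDiff_sub_le_apply (h i)
    calc c i * s (h i) - c i * Δ_[h i] f p = -c i * (Δ_[h i] f p - s (h i)) := by ring
      _ ≤ |c i| * (Δ_[h i] f p - s (h i)) :=
          mul_le_mul_of_nonneg_right (neg_le_abs _) (sub_nonneg.2 hle)
      _ ≤ _ := by gcongr
  have hsplit : s (y - p) = -s (p - w) - ∑ i, c i * s (h i) := by
    rw [show y - p = -(p - w) - (w - y) by abel, map_sub, map_neg, hwy, map_sum]
    simp only [map_smul, smul_eq_mul]
  have hshift : s (p - w) ≤ G * ‖p - w‖ :=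
    ((hs.apply_le_fwdDiff _).trans (le_abs_self _)).trans (abs_fwdDiff_le hG _ _)
  have hsum := sum_le_sum fun i (_ : i ∈ univ) => hterm i
  rw [sum_sub_distrib] at hsum
  linarith [hs y]

end Subgradient

section Averaging

variable {ι S : Type*} [Fintype ι] [DecidableEq ι] [Fintype S] [Nonempty S]

theorem expect_expect_update {M : Type*} [AddCommMonoid M] [Module ℚ≥0 M] (F : (ι → S) → M)
    (i : ι) : 𝔼 v, 𝔼 s, F (Function.update v i s) = 𝔼 v, F v := by
  let swap : (ι → S) × S → (ι → S) × S := fun q => (Function.update q.1 i q.2, q.1 i)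
  have hswap : Function.Involutive swap := fun q => by simp [swap]
  calc 𝔼 v, 𝔼 s, F (Function.update v i s) = 𝔼 q : (ι → S) × S, F (swap q).1 :=
        (expect_product' univ univ fun v s => F (Function.update v i s)).symm
    _ = 𝔼 q : (ι → S) × S, F q.1 :=
        Fintype.expect_equiv (hswap.toPerm swap) _ _ fun _ => rfl
    _ = 𝔼 v, 𝔼 _s : S, F v := expect_product' univ univ fun v _ => F v
    _ = 𝔼 v, F v := by simp only [Fintype.expect_const]

theorem expect_le_of_expect_update_le {F : (ι → S) → ℝ} {B : ℝ} (i : ι)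
    (hB : ∀ v, 𝔼 s, F (Function.update v i s) ≤ B) : 𝔼 v, F v ≤ B := by
  rw [← expect_expect_update F i]
  exact expect_le univ_nonempty fun v _ => hB v

end Averaging

section Lattice

/-- The lattice point with coordinates `v` in the box `{0, …, N - 1}^ι` spanned by `h`. -/
def latticePoint {ι E : Type*} [Fintype ι] [AddCommMonoid E] {N : ℕ} (h : ι → E)
    (v : ι → Fin N) : E :=
  ∑ i, (v i : ℕ) • h i

variable {ι : Type*} [Fintype ι] [DecidableEq ι] {N : ℕ} [NeZero N]

theorem latticePoint_update {E : Type*} [AddCommMonoid E] (h : ι → E) (v : ι → Fin N) (i : ι)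
    (m : Fin N) : latticePoint h (Function.update v i m)
      = latticePoint h (Function.update v i 0) + (m : ℕ) • h i := by
  simp only [latticePoint, Fintype.sum_eq_add_sum_compl i, Function.update_self, Fin.val_zero,
    zero_smul, zero_add]
  rw [add_comm]
  congr 1
  refine sum_congr rfl fun k hk => ?_
  have hki : k ≠ i := by simpa using hk
  rw [Function.update_of_ne hki, Function.update_of_ne hki]

/-- Along each lattice line in direction `h i` the second differences telescope, so averaging
over the `N` points of the line gains a factor `1 / N`. -/
theorem expect_second_fwdDiff_le {E : Type*} [SeminormedAddCommGroup E] {f : E → ℝ} {G : ℝ≥0}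
    (hG : LipschitzWith G f) (q : E) (h : ι → E) (i : ι) :
    𝔼 v : ι → Fin N, (Δ_[h i] f (q + latticePoint h v) - Δ_[h i] f (q + latticePoint h v - h i))
      ≤ 2 * G * ‖h i‖ / N := by
  refine expect_le_of_expect_update_le i fun v => ?_
  let φ : ℕ → ℝ := fun m =>
    Δ_[h i] f (q + latticePoint h (Function.update v i (0 : Fin N)) + m • h i - h i)
  have hφ (m : Fin N) : Δ_[h i] f (q + latticePoint h (Function.update v i m))
      - Δ_[h i] f (q + latticePoint h (Function.update v i m) - h i) = φ (m + 1) - φ m := by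
    simp only [φ]
    rw [latticePoint_update h v i m, succ_nsmul, ← add_assoc, ← add_assoc, add_sub_cancel_right]
  simp only [hφ]
  rw [Fintype.expect_eq_sum_div_card, Fintype.card_fin,
    Fin.sum_univ_eq_sum_range (fun m => φ (m + 1) - φ m), sum_range_sub]
  gcongr
  have hlast : φ N ≤ G * ‖h i‖ := (abs_le.1 (abs_fwdDiff_le hG _ _)).2
  have hfirst : -(G * ‖h i‖) ≤ φ 0 := (abs_le.1 (abs_fwdDiff_le hG _ _)).1
  linarith

theorem expect_sub_sub_sum_mul_fwdDiff_le {E : Type*} [NormedAddCommGroup E] [NormedSpace ℝ E]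
    {f : E → ℝ} {G : ℝ≥0} (hf : ConvexOn ℝ Set.univ f) (hG : LipschitzWith G f)
    {h : ι → E} {c : ι → ℝ} {w y q : E} {η : ℝ} (hwy : w - y = ∑ i, c i • h i)
    (hη : ∀ v : ι → Fin N, dist (q + latticePoint h v) w ≤ η) :
    𝔼 v : ι → Fin N, (f (q + latticePoint h v) - f y
        - ∑ i, c i * Δ_[h i] f (q + latticePoint h v))
      ≤ G * η + ∑ i, |c i| * (2 * G * ‖h i‖ / N) := by
  calc _ ≤ 𝔼 v : ι → Fin N, (G * η + ∑ i, |c i| * (Δ_[h i] f (q + latticePoint h v)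
          - Δ_[h i] f (q + latticePoint h v - h i))) := by
        refine expect_le_expect fun v _ => (sub_sub_sum_mul_fwdDiff_le hf hG hwy _).trans ?_
        rw [← dist_eq_norm]
        gcongr
        exact hη v
    _ = G * η + ∑ i, |c i| * 𝔼 v : ι → Fin N, (Δ_[h i] f (q + latticePoint h v)
          - Δ_[h i] f (q + latticePoint h v - h i)) := by
        simp only [expect_add_distrib, Fintype.expect_const, expect_sum_comm, mul_expect]
    _ ≤ _ := by
        gcongr with i
        exact expect_second_fwdDiff_le hG q h i

end Lattice

section CoordinateEstimate

variable {ι E : Type*} [Fintype ι] [NormedAddCommGroup E] [InnerProductSpace ℝ E]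
  (b : OrthonormalBasis ι ℝ E)

/-- The one-coordinate gradient estimate: for uniformly random `i`, its mean is the vector of
difference quotients of `f` at `p` with step `τ`. -/
noncomputable def coordinateEstimate (τ : ℝ) (f : E → ℝ) (p : E) (i : ι) : E :=
  (Fintype.card ι * (Δ_[τ • b i] f p / τ)) • b i

variable {τ : ℝ} {f : E → ℝ} {G : ℝ≥0}

theorem norm_coordinateEstimate_le (hτ : 0 < τ) (hG : LipschitzWith G f) (p : E) (i : ι) :
    ‖coordinateEstimate b τ f p i‖ ≤ Fintype.card ι * G := by
  have hdiff := abs_fwdDiff_le hG (τ • b i) p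
  rw [norm_smul, b.norm_eq_one, mul_one, Real.norm_of_nonneg hτ.le] at hdiff
  rw [coordinateEstimate, norm_smul, b.norm_eq_one, mul_one, Real.norm_eq_abs, abs_mul, abs_div,
    abs_of_pos hτ, Nat.abs_cast]
  gcongr
  exact (div_le_iff₀ hτ).2 hdiff

theorem expect_inner_coordinateEstimate [Nonempty ι] (τ : ℝ) (f : E → ℝ) (p u : E) :
    𝔼 i, ⟪coordinateEstimate b τ f p i, u⟫ = ∑ i, ⟪b i, u⟫ / τ * Δ_[τ • b i] f p := by
  simp only [coordinateEstimate, real_inner_smul_left, mul_assoc]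
  rw [← mul_expect, Fintype.expect_eq_sum_div_card, mul_div_cancel₀ _ (by positivity)]
  exact sum_congr rfl fun i _ => by ring

theorem expect_loss_sub_inner_coordinateEstimate_le [Nonempty ι] [DecidableEq ι] {N : ℕ}
    [NeZero N] (hτ : 0 < τ) (hf : ConvexOn ℝ Set.univ f) (hG : LipschitzWith G f)
    {w y q : E} {η : ℝ}
    (hη : ∀ v : ι → Fin N, dist (q + latticePoint (fun i => τ • b i) v) w ≤ η) :
    𝔼 σ : ι × (ι → Fin N), (f (q + latticePoint (fun i => τ • b i) σ.2) - f y
        - ⟪coordinateEstimate b τ f (q + latticePoint (fun i => τ • b i) σ.2) σ.1, w - y⟫)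
      ≤ G * η + Fintype.card ι * (2 * G * dist w y / N) := by
  have hwy : w - y = ∑ i, (⟪b i, w - y⟫ / τ) • τ • b i := by
    simp only [smul_smul, div_mul_cancel₀ _ hτ.ne', b.sum_repr']
  have hcoord (i : ι) : |⟪b i, w - y⟫ / τ| * (2 * G * ‖τ • b i‖ / N) ≤ 2 * G * dist w y / N := by
    have hle : |⟪b i, w - y⟫| ≤ dist w y := by
      simpa [b.norm_eq_one, dist_eq_norm] using abs_real_inner_le_norm (b i) (w - y)
    calc |⟪b i, w - y⟫ / τ| * (2 * G * ‖τ • b i‖ / N) = 2 * G * |⟪b i, w - y⟫| / N := by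
          rw [norm_smul, b.norm_eq_one, abs_div, Real.norm_eq_abs]
          field_simp
      _ ≤ _ := by gcongr
  calc _ = 𝔼 v : ι → Fin N, (f (q + latticePoint (fun i => τ • b i) v) - f y
          - ∑ i, ⟪b i, w - y⟫ / τ * Δ_[τ • b i] f (q + latticePoint (fun i => τ • b i) v)) := by
        rw [← univ_product_univ, expect_product, expect_comm]
        simp only [expect_sub_distrib, Fintype.expect_const, expect_inner_coordinateEstimate]
    _ ≤ G * η + ∑ i, |⟪b i, w - y⟫ / τ| * (2 * G * ‖τ • b i‖ / N) :=
        expect_sub_sub_sum_mul_fwdDiff_le hf hG hwy hη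
    _ ≤ G * η + ∑ _i : ι, 2 * G * dist w y / N := by
        gcongr with i
        exact hcoord i
    _ = _ := by rw [sum_const, card_univ, nsmul_eq_mul]

end CoordinateEstimate

section ProjectedDescent

theorem sum_Icc_le_of_le_sub_add {x Φ : ℕ → ℝ} {c : ℝ} {j s : ℕ}
    (h : ∀ t, x t ≤ Φ (t + 1) - Φ t + c) (hjs : j ≤ s) :
    ∑ t ∈ Icc j s, x t ≤ Φ (s + 1) - Φ j + #(Icc j s) * c := by
  refine (sum_le_sum fun t _ => h t).trans_eq ?_
  rw [sum_add_distrib, sum_Icc_sub hjs, sum_const, nsmul_eq_mul]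

variable {E : Type*} [NormedAddCommGroup E] [InnerProductSpace ℝ E]

theorem exists_convex_projection {C : Set E} (hne : C.Nonempty) (hcomp : IsComplete C)
    (hC : Convex ℝ C) :
    ∃ P : E → E, (∀ x, P x ∈ C) ∧ ∀ x, ∀ y ∈ C, dist (P x) y ≤ dist x y := by
  choose P hP hmin using exists_norm_eq_iInf_of_complete_convex hne hcomp hC
  refine ⟨P, hP, fun x y hy => ?_⟩
  have hobtuse := (norm_eq_iInf_iff_real_inner_le_zero hC (hP x)).1 (hmin x) y hy
  have hexpand := norm_sub_sq_real (x - P x) (y - P x)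
  rw [sub_sub_sub_cancel_right, norm_sub_rev y] at hexpand
  rw [dist_eq_norm, dist_eq_norm]
  exact le_of_sq_le_sq (by linarith [sq_nonneg ‖x - P x‖]) (norm_nonneg _)

variable {γ L : ℝ} {y : E}

theorem inner_le_of_dist_le_dist_sub_smul {x x' g : E} (hγ : 0 < γ)
    (hx' : dist x' y ≤ dist (x - γ • g) y) (hg : ‖g‖ ≤ L) :
    ⟪g, x - y⟫ ≤ (dist x y ^ 2 - dist x' y ^ 2) / (2 * γ) + γ * L ^ 2 / 2 := by
  have hexpand := norm_sub_sq_real (x - y) (γ • g)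
  rw [inner_smul_right, real_inner_comm, norm_smul, Real.norm_of_nonneg hγ.le, sub_right_comm,
    ← dist_eq_norm, ← dist_eq_norm] at hexpand
  have hstep : dist x' y ^ 2 ≤ dist (x - γ • g) y ^ 2 := by gcongr
  have hnorm : (γ * ‖g‖) ^ 2 ≤ (γ * L) ^ 2 := by gcongr
  rw [← sub_le_iff_le_add, le_div_iff₀ (by positivity)]
  linarith

theorem sum_inner_le_of_projected_descent {z g : ℕ → E} (hγ : 0 < γ)
    (hz : ∀ t, dist (z (t + 1)) y ≤ dist (z t - γ • g t) y) (hg : ∀ t, ‖g t‖ ≤ L) {j s : ℕ}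
    (hjs : j ≤ s) : ∑ t ∈ Icc j s, ⟪g t, z t - y⟫
      ≤ dist (z j) y ^ 2 / (2 * γ) + #(Icc j s) * (γ * L ^ 2 / 2) := by
  have hsum := sum_Icc_le_of_le_sub_add (x := fun t => ⟪g t, z t - y⟫)
    (Φ := fun t => -(dist (z t) y ^ 2 / (2 * γ))) (c := γ * L ^ 2 / 2)
    (fun t => (inner_le_of_dist_le_dist_sub_smul hγ (hz t) (hg t)).trans_eq (by ring)) hjs
  have hlast : 0 ≤ dist (z (s + 1)) y ^ 2 / (2 * γ) := by positivity
  linarith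

end ProjectedDescent

section FixedShare

variable {ι : Type*} [Fintype ι] {η : ι → ℝ} {α : ℝ}

/-- The fixed-share update of weights `a` by gains `r`: multiplicative weights with learning rate
`η k` for expert `k`, after which a fraction `α` of the mass is spread uniformly. -/
noncomputable def fixedShare (η : ι → ℝ) (α : ℝ) (a r : ι → ℝ) : ι → ℝ := fun k =>
  (1 - α) * (a k * (1 + η k * r k)) + α / Fintype.card ι

theorem div_card_le_fixedShare {a r : ι → ℝ} {k : ι} (hα : α ≤ 1) (ha : 0 ≤ a k)
    (hr : -1 ≤ η k * r k) : α / Fintype.card ι ≤ fixedShare η α a r k :=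
  le_add_of_nonneg_left <| mul_nonneg (by linarith) <| mul_nonneg ha <| by linarith

theorem sum_fixedShare [Nonempty ι] {a r : ι → ℝ} (hbal : ∑ k, η k * a k * r k = 0) :
    ∑ k, fixedShare η α a r k = (1 - α) * ∑ k, a k + α := by
  have hgain : ∑ k, a k * (1 + η k * r k) = ∑ k, a k := by
    rw [← add_zero (∑ k, a k), ← hbal, ← sum_add_distrib]
    exact sum_congr rfl fun k _ => by ring
  simp only [fixedShare, sum_add_distrib, ← mul_sum, hgain, sum_const, card_univ, nsmul_eq_mul]
  rw [mul_div_cancel₀ _ (by positivity)]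

theorem sub_two_mul_sq_le_log_one_add {x : ℝ} (hx : -(1 / 2) ≤ x) :
    x - 2 * x ^ 2 ≤ Real.log (1 + x) := by
  have hpos : 0 < 1 + x := by linarith
  refine le_trans ?_ (Real.one_sub_inv_le_log_of_pos hpos)
  rw [← one_div, one_sub_div hpos.ne', add_sub_cancel_left, le_div_iff₀ hpos]
  linarith [mul_nonneg (sq_nonneg x) (by linarith : 0 ≤ 1 + 2 * x)]

theorem mul_le_log_fixedShare_sub_log {a r : ι → ℝ} {k : ι} (hη0 : 0 ≤ η k) (hη : η k ≤ 1 / 2)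
    (hα0 : 0 ≤ α) (hα : α ≤ 1 / 2) (ha : 0 < a k) (hr : |r k| ≤ 1) :
    η k * r k
      ≤ Real.log (fixedShare η α a r k) - Real.log (a k) + (2 * η k ^ 2 + 2 * α) := by
  have hx : |η k * r k| ≤ η k := by
    rw [abs_mul, abs_of_nonneg hη0]
    exact mul_le_of_le_one_right hη0 hr
  have hlow : -(1 / 2) ≤ η k * r k := by linarith [neg_le_of_abs_le hx]
  have hpos : 0 < 1 + η k * r k := by linarith
  have hmono : Real.log ((1 - α) * (a k * (1 + η k * r k))) ≤ Real.log (fixedShare η α a r k) :=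
    Real.log_le_log (mul_pos (by linarith) (mul_pos ha hpos))
      (le_add_of_nonneg_right (by positivity))
  rw [Real.log_mul (by linarith) (mul_pos ha hpos).ne', Real.log_mul ha.ne' hpos.ne'] at hmono
  have hgain := sub_two_mul_sq_le_log_one_add hlow
  have hshare := sub_two_mul_sq_le_log_one_add (neg_le_neg hα)
  rw [← sub_eq_add_neg] at hshare
  have hsq := sq_le_sq' (neg_le_of_abs_le hx) (le_of_abs_le hx)
  nlinarith

theorem sum_gain_le_of_fixedShare {a r : ℕ → ι → ℝ} {k : ι} (hη0 : 0 < η k) (hη : η k ≤ 1 / 2)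
    (hα0 : 0 < α) (hα : α ≤ 1 / 2) (hstep : ∀ t, a (t + 1) = fixedShare η α (a t) (r t))
    (ha : ∀ t, α / Fintype.card ι ≤ a t k) (ha' : ∀ t, a t k ≤ 1) (hr : ∀ t, |r t k| ≤ 1)
    {j s : ℕ} (hjs : j ≤ s) : ∑ t ∈ Icc j s, r t k
      ≤ (Real.log (Fintype.card ι / α) + #(Icc j s) * (2 * η k ^ 2 + 2 * α)) / η k := by
  have : Nonempty ι := ⟨k⟩
  have hpos (t : ℕ) : 0 < a t k := (by positivity : 0 < α / Fintype.card ι).trans_le (ha t)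
  have hsum := sum_Icc_le_of_le_sub_add (x := fun t => η k * r t k)
    (Φ := fun t => Real.log (a t k)) (fun t => by
      rw [hstep]
      exact mul_le_log_fixedShare_sub_log hη0.le hη hα0.le hα (hpos t) (hr t)) hjs
  have hlast : Real.log (a (s + 1) k) ≤ 0 := Real.log_nonpos (hpos _).le (ha' _)
  have hfirst : -Real.log (a j k) ≤ Real.log (Fintype.card ι / α) := by
    rw [← Real.log_inv, ← inv_div]
    exact Real.log_le_log (inv_pos.2 (hpos j)) (inv_anti₀ (by positivity) (ha j))
  rw [le_div_iff₀' hη0, mul_sum]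
  linarith

end FixedShare

section ExpertPool

/-- The state of a finite family of experts: each has a current point and a current weight. -/
structure ExpertState (ι E : Type*) where
  point : ι → E
  weight : ι → ℝ

/-- A pool of experts for online linear optimization on `C`. Expert `k` runs projected gradient
descent with step `stepSize k`; the pool aggregates them by fixed share with learning rates
`rate k` and gains measured in units of `scale`. -/
structure ExpertPool (ι : Type*) {E : Type*} [NormedAddCommGroup E] [InnerProductSpace ℝ E]
    (C : Set E) where
  proj : E → E
  proj_mem : ∀ x, proj x ∈ C
  dist_proj_le : ∀ x, ∀ y ∈ C, dist (proj x) y ≤ dist x y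
  stepSize : ι → ℝ
  stepSize_pos : ∀ k, 0 < stepSize k
  rate : ι → ℝ
  rate_pos : ∀ k, 0 < rate k
  rate_le_half : ∀ k, rate k ≤ 1 / 2
  share : ℝ
  share_pos : 0 < share
  share_le_half : share ≤ 1 / 2
  scale : ℝ
  scale_pos : 0 < scale

namespace ExpertPool

variable {ι E : Type*} [NormedAddCommGroup E] [InnerProductSpace ℝ E] {C : Set E}
  (M : ExpertPool ι C)

theorem proj_eq_self {x : E} (hx : x ∈ C) : M.proj x = x :=
  dist_le_zero.1 <| (M.dist_proj_le x x hx).trans_eq (dist_self x)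

variable [Fintype ι]

/-- The aggregated point. Weighting by `rate k * weight k` rather than by `weight k` makes the
gains cancel in the fixed-share update although each expert has its own rate. -/
noncomputable def center (S : ExpertState ι E) : E :=
  univ.centerMass (fun k => M.rate k * S.weight k) S.point

/-- The normalized gain of expert `k` over the aggregated point on the linear loss `g`. -/
noncomputable def gain (S : ExpertState ι E) (g : E) (k : ι) : ℝ :=
  ⟪g, M.center S - S.point k⟫ / M.scale

/-- The state after the pool has observed the linear loss `g`. -/
noncomputable def update (S : ExpertState ι E) (g : E) : ExpertState ι E where
  point k := M.proj (S.point k - M.stepSize k • g)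
  weight := fixedShare M.rate M.share S.weight (M.gain S g)

/-- The state after the linear losses `h`. -/
noncomputable def state (h : List E) : ExpertState ι E :=
  h.foldl M.update ⟨fun _ => M.proj 0, fun _ => 1 / Fintype.card ι⟩

/-- The point chosen by the pool after the linear losses `h`. The outer projection only guarantees
membership in `C` for unbounded losses, where weights may become negative. -/
noncomputable def play (h : List E) : E := M.proj (M.center (M.state h))

/-- The invariant of the pool's state: points in the domain and a probability vector of weights
bounded below by the uniform share. -/
structure Admissible (S : ExpertState ι E) : Prop where
  point_mem : ∀ k, S.point k ∈ C
  share_div_card_le : ∀ k, M.share / Fintype.card ι ≤ S.weight k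
  sum_weight : ∑ k, S.weight k = 1

theorem state_map_range_succ (g : ℕ → E) (t : ℕ) :
    M.state ((List.range (t + 1)).map g) = M.update (M.state ((List.range t).map g)) (g t) := by
  simp only [state, List.range_succ, List.map_append, List.foldl_append, List.map_cons,
    List.map_nil, List.foldl_cons, List.foldl_nil]

variable [Nonempty ι]

namespace Admissible

variable {M} {S : ExpertState ι E} {g : E}

theorem weight_pos (hS : M.Admissible S) (k : ι) : 0 < S.weight k :=
  (div_pos M.share_pos (by positivity)).trans_le (hS.share_div_card_le k)

theorem weight_le_one (hS : M.Admissible S) (k : ι) : S.weight k ≤ 1 := by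
  rw [← hS.sum_weight]
  exact single_le_sum (fun i _ => (hS.weight_pos i).le) (mem_univ k)

theorem rate_mul_weight_pos (hS : M.Admissible S) (k : ι) : 0 < M.rate k * S.weight k :=
  mul_pos (M.rate_pos k) (hS.weight_pos k)

theorem sum_rate_mul_weight_pos (hS : M.Admissible S) : 0 < ∑ k, M.rate k * S.weight k :=
  sum_pos (fun k _ => hS.rate_mul_weight_pos k) univ_nonempty

theorem center_mem (hS : M.Admissible S) (hC : Convex ℝ C) : M.center S ∈ C :=
  hC.centerMass_mem (fun k _ => (hS.rate_mul_weight_pos k).le) hS.sum_rate_mul_weight_pos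
    fun k _ => hS.point_mem k

theorem sum_rate_mul_weight_mul_gain (hS : M.Admissible S) (g : E) :
    ∑ k, M.rate k * S.weight k * M.gain S g k = 0 := by
  have hbalance : ∑ k, (M.rate k * S.weight k) • (M.center S - S.point k) = 0 := by
    simp only [smul_sub, sum_sub_distrib, ← sum_smul]
    rw [center, centerMass, smul_inv_smul₀ hS.sum_rate_mul_weight_pos.ne', sub_self]
  simp only [gain, ← mul_div_assoc, ← real_inner_smul_right, ← sum_div, ← inner_sum]
  rw [hbalance, inner_zero_right, zero_div]

theorem abs_gain_le_one (hS : M.Admissible S) (hC : Convex ℝ C)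
    (hg : ∀ x ∈ C, ∀ y ∈ C, |⟪g, x - y⟫| ≤ M.scale) (k : ι) : |M.gain S g k| ≤ 1 := by
  rw [gain, abs_div, abs_of_pos M.scale_pos, div_le_one M.scale_pos]
  exact hg _ (hS.center_mem hC) _ (hS.point_mem k)

theorem update (hS : M.Admissible S) (hC : Convex ℝ C)
    (hg : ∀ x ∈ C, ∀ y ∈ C, |⟪g, x - y⟫| ≤ M.scale) : M.Admissible (M.update S g) where
  point_mem _ := M.proj_mem _
  share_div_card_le k := by
    refine div_card_le_fixedShare (by linarith [M.share_le_half]) (hS.weight_pos k).le ?_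
    have := neg_le_of_abs_le (hS.abs_gain_le_one hC hg k)
    nlinarith [M.rate_pos k, M.rate_le_half k]
  sum_weight := by
    change ∑ k, fixedShare M.rate M.share S.weight (M.gain S g) k = 1
    rw [sum_fixedShare (hS.sum_rate_mul_weight_mul_gain g), hS.sum_weight]
    ring

end Admissible

theorem admissible_state (hC : Convex ℝ C) {h : List E}
    (hh : ∀ g ∈ h, ∀ x ∈ C, ∀ y ∈ C, |⟪g, x - y⟫| ≤ M.scale) : M.Admissible (M.state h) := by
  induction h using List.reverseRecOn with
  | nil =>
    refine ⟨fun _ => M.proj_mem 0, fun _ => ?_, ?_⟩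
    · exact div_le_div_of_nonneg_right (by linarith [M.share_le_half]) (by positivity)
    · change ∑ _k : ι, 1 / (Fintype.card ι : ℝ) = 1
      rw [sum_const, card_univ, nsmul_eq_mul, mul_one_div_cancel (by positivity)]
  | append_singleton h g ih =>
    rw [state, List.foldl_append]
    exact (ih fun g' hg' => hh g' (by simp [hg'])).update hC (hh g (by simp))

theorem inner_play_sub_eq (hC : Convex ℝ C) {h : List E} (hS : M.Admissible (M.state h))
    (g y : E) (k : ι) : ⟪g, M.play h - y⟫
      = M.scale * M.gain (M.state h) g k + ⟪g, (M.state h).point k - y⟫ := by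
  rw [play, M.proj_eq_self (hS.center_mem hC), gain, mul_div_cancel₀ _ M.scale_pos.ne',
    ← inner_add_right, sub_add_sub_cancel]

theorem sum_inner_play_le (hC : Convex ℝ C) {g : ℕ → E} {D L : ℝ} (hg : ∀ t, ‖g t‖ ≤ L)
    (hD : ∀ x ∈ C, ∀ y ∈ C, dist x y ≤ D) (hscale : L * D ≤ M.scale) {y : E} (hy : y ∈ C)
    {j s : ℕ} (hjs : j ≤ s) (k : ι) :
    ∑ t ∈ Icc j s, ⟪g t, M.play ((List.range t).map g) - y⟫
      ≤ M.scale * ((Real.log (Fintype.card ι / M.share)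
          + #(Icc j s) * (2 * M.rate k ^ 2 + 2 * M.share)) / M.rate k)
        + (D ^ 2 / (2 * M.stepSize k) + #(Icc j s) * (M.stepSize k * L ^ 2 / 2)) := by
  set S : ℕ → ExpertState ι E := fun t => M.state ((List.range t).map g)
  have hbound (t : ℕ) : ∀ x ∈ C, ∀ y ∈ C, |⟪g t, x - y⟫| ≤ M.scale := fun x hx y hy =>
    calc |⟪g t, x - y⟫| ≤ ‖g t‖ * dist x y := by
          rw [dist_eq_norm]
          exact abs_real_inner_le_norm _ _
      _ ≤ L * D := mul_le_mul (hg t) (hD x hx y hy) dist_nonneg ((norm_nonneg _).trans (hg t))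
      _ ≤ M.scale := hscale
  have hadm (t : ℕ) : M.Admissible (S t) :=
    M.admissible_state hC (by simpa using fun i _ => hbound i)
  have hsplit (t : ℕ) : ⟪g t, M.play ((List.range t).map g) - y⟫
      = M.scale * M.gain (S t) (g t) k + ⟪g t, (S t).point k - y⟫ :=
    M.inner_play_sub_eq hC (hadm t) (g t) y k
  have hmeta : ∑ t ∈ Icc j s, M.gain (S t) (g t) k ≤ _ :=
    sum_gain_le_of_fixedShare (a := fun t => (S t).weight) (M.rate_pos k) (M.rate_le_half k)
      M.share_pos M.share_le_half (fun t => by simp only [S, state_map_range_succ, update])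
      (fun t => (hadm t).share_div_card_le k) (fun t => (hadm t).weight_le_one k)
      (fun t => (hadm t).abs_gain_le_one hC (hbound t) k) hjs
  have hbase : ∑ t ∈ Icc j s, ⟪g t, (S t).point k - y⟫ ≤ _ :=
    sum_inner_le_of_projected_descent (M.stepSize_pos k)
      (fun t => by simpa only [S, state_map_range_succ, update] using M.dist_proj_le _ y hy) hg hjs
  have hstart : dist ((S j).point k) y ≤ D := hD _ ((hadm j).point_mem k) y hy
  simp only [hsplit, sum_add_distrib, ← mul_sum]
  have := M.stepSize_pos k
  refine add_le_add (mul_le_mul_of_nonneg_left hmeta M.scale_pos.le) (hbase.trans ?_)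
  gcongr

/-- The pool whose expert `k` is tuned for intervals of `k + 1` rounds, for losses of norm at most
`L` on a domain of diameter at most `D`. -/
noncomputable def tuned {P : E → E} (hPC : ∀ x, P x ∈ C)
    (hP : ∀ x, ∀ y ∈ C, dist (P x) y ≤ dist x y) {D L : ℝ} (hD : 0 < D) (hL : 0 < L) {T : ℕ}
    (hT : 2 ≤ T) : ExpertPool (Fin T) C where
  proj := P
  proj_mem := hPC
  dist_proj_le := hP
  stepSize k := D / (L * √(k + 1 : ℕ))
  stepSize_pos k := by positivity
  rate k := 1 / (2 * √(k + 1 : ℕ))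
  rate_pos k := by positivity
  rate_le_half k := by
    have : 1 ≤ √((k + 1 : ℕ) : ℝ) := Real.one_le_sqrt.2 (by simp)
    exact one_div_le_one_div_of_le two_pos (by linarith)
  share := 1 / T
  share_pos := by positivity
  share_le_half := one_div_le_one_div_of_le two_pos (by exact_mod_cast hT)
  scale := L * D
  scale_pos := by positivity

end ExpertPool

theorem exists_strongly_adaptive_learner {E : Type*} [NormedAddCommGroup E]
    [InnerProductSpace ℝ E] {C : Set E} {D L : ℝ} {T : ℕ} (hne : C.Nonempty)
    (hcomp : IsComplete C) (hC : Convex ℝ C) (hD : ∀ x ∈ C, ∀ y ∈ C, dist x y ≤ D) (hD0 : 0 < D)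
    (hL : 0 < L) (hT : 2 ≤ T) :
    ∃ W : List E → E, (∀ h, W h ∈ C) ∧ ∀ g : ℕ → E, (∀ t, ‖g t‖ ≤ L) → ∀ j s, j ≤ s → s < T →
      ∀ y ∈ C, ∑ t ∈ Icc j s, ⟪g t, W ((List.range t).map g) - y⟫
        ≤ D * L * √(#(Icc j s)) * (4 * Real.log T + 6) := by
  have : NeZero T := ⟨by omega⟩
  obtain ⟨P, hPC, hP⟩ := exists_convex_projection hne hcomp hC
  let M := ExpertPool.tuned hPC hP hD0 hL hT
  refine ⟨M.play, fun h => hPC _, fun g hg j s hjs hsT y hy => ?_⟩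
  have hk : s - j + 1 = #(Icc j s) := by
    rw [Nat.card_Icc]
    omega
  have hlog : Real.log (T / (1 / T)) = 2 * Real.log T := by
    rw [div_div_eq_mul_div, div_one, ← pow_two, Real.log_pow, Nat.cast_ofNat]
  have hregret := M.sum_inner_play_le hC hg hD le_rfl hy hjs ⟨s - j, by omega⟩
  simp only [M, ExpertPool.tuned, Fintype.card_fin, hk, hlog] at hregret
  set n := #(Icc j s)
  have hnT : (n : ℝ) / T ≤ 1 := div_le_one_of_le₀ (by exact_mod_cast (by omega)) (by positivity)
  set q := √(n : ℝ)
  have hq : q ^ 2 = n := Real.sq_sqrt (by positivity)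
  have hq0 : 0 < q := Real.sqrt_pos.2 (by exact_mod_cast (by omega))
  calc _ ≤ _ := hregret
    _ = D * L * q * (4 * Real.log T + 2 + 4 * (n / T)) := by
        rw [← hq]
        field_simp
        ring
    _ ≤ D * L * q * (4 * Real.log T + 6) :=
        mul_le_mul_of_nonneg_left (by linarith) (by positivity)

end ExpertPool

section BanditReduction

/-- The choice `(x, y, u)` of a three-query algorithm in one round: the played point, the base
query point and the query direction. -/
abbrev BCOAction (d : ℕ) :=
  EuclideanSpace ℝ (Fin d) × EuclideanSpace ℝ (Fin d) × EuclideanSpace ℝ (Fin d)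

/-- The record of a round in which the action `a` meets the loss `f`. -/
def observe {d : ℕ} (δ : ℝ) (f : EuclideanSpace ℝ (Fin d) → ℝ) (a : BCOAction d) : BCORecord d :=
  (a.1, a.2.1, a.2.2, f a.1, f a.2.1, f (a.2.1 + δ • a.2.2))

variable {d : ℕ} {S : Type} {δ : ℝ} {ℓ : ℕ → EuclideanSpace ℝ (Fin d) → ℝ} {t : ℕ}

/-- The history after `t` rounds when `strategy` chooses each action from the history so far and
the seed `τ i` of the round. -/
def seededHist (strategy : List (BCORecord d) → S → BCOAction d) (δ : ℝ)
    (ℓ : ℕ → EuclideanSpace ℝ (Fin d) → ℝ) (τ : ℕ → S) : ℕ → List (BCORecord d)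
  | 0 => []
  | t + 1 =>
      let h := seededHist strategy δ ℓ τ t
      h ++ [observe δ (ℓ t) (strategy h (τ t))]

variable {strategy : List (BCORecord d) → S → BCOAction d}

theorem seededHist_eq_map_range (τ : ℕ → S) :
    seededHist strategy δ ℓ τ t = (List.range t).map fun i =>
      observe δ (ℓ i) (strategy (seededHist strategy δ ℓ τ i) (τ i)) := by
  induction t with
  | zero => rfl
  | succ t ih =>
    rw [List.range_succ, List.map_append, ← ih]
    rfl

theorem seededHist_congr {τ τ' : ℕ → S} (h : ∀ i < t, τ i = τ' i) :
    seededHist strategy δ ℓ τ t = seededHist strategy δ ℓ τ' t := by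
  induction t with
  | zero => rfl
  | succ t ih => simp only [seededHist, ih fun i hi => h i (by omega), h t t.lt_succ_self]

theorem length_seededHist (τ : ℕ → S) : (seededHist strategy δ ℓ τ t).length = t := by
  rw [seededHist_eq_map_range, List.length_map, List.length_range]

variable [Fintype S] [Nonempty S] {T : ℕ} [NeZero T]

theorem expect_seededHist_le {F : List (BCORecord d) → S → ℝ} {B : ℝ} (ht : t < T)
    (hB : ∀ h, 𝔼 σ, F h σ ≤ B) :
    𝔼 ω : Fin T → S, F (seededHist strategy δ ℓ (ω ∘ Fin.ofNat T) t) (ω (Fin.ofNat T t)) ≤ B := by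
  refine expect_le_of_expect_update_le (Fin.ofNat T t) fun ω => ?_
  have hpast (σ : S) :
      seededHist strategy δ ℓ (Function.update ω (Fin.ofNat T t) σ ∘ Fin.ofNat T) t
        = seededHist strategy δ ℓ (ω ∘ Fin.ofNat T) t := seededHist_congr fun i hi => by
    have hne : Fin.ofNat T i ≠ Fin.ofNat T t := by
      rw [Ne, Fin.ext_iff, Fin.val_ofNat, Fin.val_ofNat, Nat.mod_eq_of_lt (by omega),
        Nat.mod_eq_of_lt ht]
      omega
    simp only [Function.comp_apply, Function.update_of_ne hne]
  simpa only [hpast, Function.update_self] using hB _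

variable {K : Set (EuclideanSpace ℝ (Fin d))}

/-- The algorithm that draws an independent uniform seed from `S` in each of the `T` rounds and
follows `strategy`. The current round is read off the length of the history, modulo `T`. -/
noncomputable def seededAlg (T : ℕ) [NeZero T] (strategy : List (BCORecord d) → S → BCOAction d)
    (hmem : ∀ h σ, (strategy h σ).1 ∈ K) (hunit : ∀ h σ, ‖(strategy h σ).2.2‖ = 1) :
    BCOAlg3 d K where
  Ω := Fin T → S
  inst := ⊤
  μ := @PMF.toMeasure _ ⊤ (PMF.uniformOfFintype (Fin T → S))
  prob := @PMF.toMeasure.isProbabilityMeasure _ ⊤ _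
  act h ω := strategy h (ω (Fin.ofNat T h.length))
  play_mem _ _ := hmem _ _
  unit_dir _ _ := hunit _ _

variable {hmem : ∀ h σ, (strategy h σ).1 ∈ K} {hunit : ∀ h σ, ‖(strategy h σ).2.2‖ = 1}

theorem integrable_seededAlg (F : (Fin T → S) → ℝ) :
    Integrable F (seededAlg T strategy hmem hunit).μ := by
  let : MeasurableSpace (Fin T → S) := ⊤
  have : MeasurableSingletonClass (Fin T → S) := ⟨fun _ => trivial⟩
  exact Integrable.of_finite (μ := (PMF.uniformOfFintype (Fin T → S)).toMeasure)

theorem integral_seededAlg (F : (Fin T → S) → ℝ) :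
    ∫ ω, F ω ∂(seededAlg T strategy hmem hunit).μ = 𝔼 ω, F ω := by
  let : MeasurableSpace (Fin T → S) := ⊤
  have : MeasurableSingletonClass (Fin T → S) := ⟨fun _ => trivial⟩
  refine (PMF.integral_eq_sum (PMF.uniformOfFintype (Fin T → S)) F).trans ?_
  simp only [PMF.uniformOfFintype_apply, ENNReal.toReal_inv, ENNReal.toReal_natCast, smul_eq_mul,
    ← mul_sum, Fintype.expect_eq_sum_div_card, div_eq_inv_mul]

theorem bcoHist3_seededAlg (ω : Fin T → S) :
    bcoHist3 (seededAlg T strategy hmem hunit) δ ℓ t ω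
      = seededHist strategy δ ℓ (ω ∘ Fin.ofNat T) t := by
  induction t with
  | zero => rfl
  | succ t ih =>
    let next (h : List (BCORecord d)) : List (BCORecord d) :=
      h ++ [observe δ (ℓ t) (strategy h (ω (Fin.ofNat T h.length)))]
    refine (congrArg next ih).trans ?_
    simp only [next, length_seededHist]
    rfl

theorem bcoPlay3_seededAlg (ω : Fin T → S) : bcoPlay3 (seededAlg T strategy hmem hunit) δ ℓ t ω
    = (strategy (seededHist strategy δ ℓ (ω ∘ Fin.ofNat T) t) (ω (Fin.ofNat T t))).1 := by
  let play (h : List (BCORecord d)) : EuclideanSpace ℝ (Fin d) :=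
    (strategy h (ω (Fin.ofNat T h.length))).1
  refine (congrArg play (bcoHist3_seededAlg ω)).trans ?_
  simp only [play, length_seededHist]

theorem integral_loss_seededAlg :
    ∫ ω, ℓ t (bcoPlay3 (seededAlg T strategy hmem hunit) δ ℓ t ω)
        ∂(seededAlg T strategy hmem hunit).μ
      = 𝔼 ω : Fin T → S,
          ℓ t (strategy (seededHist strategy δ ℓ (ω ∘ Fin.ofNat T) t) (ω (Fin.ofNat T t))).1 :=
  (integral_seededAlg _).trans <| expect_congr rfl fun ω _ =>
    congrArg (ℓ t) (bcoPlay3_seededAlg ω)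

theorem seededAlg_expected_regret_le
    {est : BCORecord d → EuclideanSpace ℝ (Fin d)}
    {W : List (EuclideanSpace ℝ (Fin d)) → EuclideanSpace ℝ (Fin d)}
    {y : EuclideanSpace ℝ (Fin d)} {B L R : ℝ} {j s : ℕ} (hs : s < T)
    (hbias : ∀ t h, 𝔼 σ, (ℓ t (strategy h σ).1 - ℓ t y
      - ⟪est (observe δ (ℓ t) (strategy h σ)), W (h.map est) - y⟫) ≤ B)
    (hest : ∀ t h σ, ‖est (observe δ (ℓ t) (strategy h σ))‖ ≤ L)
    (hW : ∀ g : ℕ → EuclideanSpace ℝ (Fin d), (∀ t, ‖g t‖ ≤ L) →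
      ∑ t ∈ Icc j s, ⟪g t, W ((List.range t).map g) - y⟫ ≤ R) :
    (∑ t ∈ Icc j s, ∫ ω, ℓ t (bcoPlay3 (seededAlg T strategy hmem hunit) δ ℓ t ω)
        ∂(seededAlg T strategy hmem hunit).μ) - ∑ t ∈ Icc j s, ℓ t y
      ≤ #(Icc j s) * B + R := by
  let H : (Fin T → S) → ℕ → List (BCORecord d) := fun ω => seededHist strategy δ ℓ (ω ∘ Fin.ofNat T)
  let a : (Fin T → S) → ℕ → BCOAction d := fun ω t => strategy (H ω t) (ω (Fin.ofNat T t))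
  let g : (Fin T → S) → ℕ → EuclideanSpace ℝ (Fin d) := fun ω t => est (observe δ (ℓ t) (a ω t))
  have hH (ω : Fin T → S) (t : ℕ) : (H ω t).map est = (List.range t).map (g ω) := by
    simp only [H, seededHist_eq_map_range (t := t), List.map_map]
    rfl
  have hround : ∀ t ∈ Icc j s, 𝔼 ω, (ℓ t (a ω t).1 - ℓ t y
      - ⟪g ω t, W ((List.range t).map (g ω)) - y⟫) ≤ B := fun t ht => by
    simp only [← hH]
    exact expect_seededHist_le ((mem_Icc.1 ht).2.trans_lt hs) (hbias t)
  have hregret : 𝔼 ω, ∑ t ∈ Icc j s, ⟪g ω t, W ((List.range t).map (g ω)) - y⟫ ≤ R :=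
    expect_le univ_nonempty fun ω _ => hW (g ω) fun t => hest t _ _
  have hsum := sum_le_sum hround
  simp only [expect_sub_distrib, Fintype.expect_const, sum_sub_distrib, sum_const,
    nsmul_eq_mul] at hsum
  rw [expect_sum_comm] at hregret
  simp only [integral_loss_seededAlg]
  linarith

end BanditReduction

section Perturbation

theorem exists_pos_forall_add_smul_mem {ι E : Type*} [Finite ι] [AddCommGroup E] [Module ℝ E]
    [TopologicalSpace E] [ContinuousAdd E] [ContinuousSMul ℝ E] {U : Set E} (hU : IsOpen U)
    {a : E} (ha : a ∈ U) (u : ι → E) : ∃ ε > (0 : ℝ), ∀ i, a + ε • u i ∈ U := by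
  have hnear : ∀ᶠ ε in nhdsWithin (0 : ℝ) (Set.Ioi 0), ∀ i, a + ε • u i ∈ U := by
    refine Filter.Eventually.filter_mono nhdsWithin_le_nhds (Filter.eventually_all.2 fun i => ?_)
    have hcont : Continuous fun ε : ℝ => a + ε • u i := by fun_prop
    exact hcont.continuousAt.eventually_mem (hU.mem_nhds (by simpa using ha))
  obtain ⟨ε, hmem, hε⟩ := (hnear.and self_mem_nhdsWithin).exists
  exact ⟨ε, hε, hmem⟩

/-- Shrinking towards an interior point makes room for a small lattice box. -/
theorem exists_lattice_perturbation {ι E : Type*} [Fintype ι] [NormedAddCommGroup E]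
    [NormedSpace ℝ E] {K : Set E} (hK : Convex ℝ K) (hbdd : Bornology.IsBounded K)
    (hint : (interior K).Nonempty) {ρ : ℝ} (hρ : ρ ∈ Set.Ioc 0 1) (h : ι → E) (N : ℕ) :
    ∃ τ > (0 : ℝ), ∃ q : E → E, ∀ w ∈ closure K, ∀ v : ι → Fin N,
      q w + latticePoint (fun i => τ • h i) v ∈ K ∧
        dist (q w + latticePoint (fun i => τ • h i) v) w ≤ ρ * Metric.diam K := by
  obtain ⟨a, ha⟩ := hint
  obtain ⟨ε, hε, hmem⟩ := exists_pos_forall_add_smul_mem isOpen_interior ha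
    fun v : ι → Fin N => latticePoint h v
  refine ⟨ρ * ε, mul_pos hρ.1 hε, fun w => w + ρ • (a - w), fun w hw v => ?_⟩
  have hlat : w + ρ • (a - w) + latticePoint (fun i => (ρ * ε) • h i) v
      = w + ρ • (a + ε • latticePoint h v - w) := by
    have : latticePoint (fun i => (ρ * ε) • h i) v = (ρ * ε) • latticePoint h v := by
      simp only [latticePoint, smul_sum, smul_comm (ρ * ε)]
    rw [this]
    module
  rw [hlat]
  refine ⟨interior_subset (hK.add_smul_sub_mem_interior' hw (hmem v) hρ), ?_⟩
  rw [dist_self_add_left, norm_smul, Real.norm_of_nonneg hρ.1.le, ← dist_eq_norm,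
    ← Metric.diam_closure]
  exact mul_le_mul_of_nonneg_left (Metric.dist_le_diam_of_mem hbdd.closure
    (subset_closure (interior_subset (hmem v))) hw) hρ.1.le

end Perturbation

section LatticeAction

variable {d N : ℕ}

/-- The gradient estimate formed from the played point and the base query of a record, namely `d`
times the difference quotient along the segment joining them. -/
noncomputable def gradientEstimate : BCORecord d → EuclideanSpace ℝ (Fin d)
  | (x, y, _, fx, fy, _) => (d * ((fy - fx) / ‖y - x‖ ^ 2)) • (y - x)

/-- The action with seed `(i, v)`: play the point with coordinates `v` of the lattice of step `τ`
based at `q`, and query its neighbour in direction `b i`. -/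
noncomputable def latticeAction (b : OrthonormalBasis (Fin d) ℝ (EuclideanSpace ℝ (Fin d)))
    (τ : ℝ) (q : EuclideanSpace ℝ (Fin d)) : Fin d × (Fin d → Fin N) → BCOAction d
  | (i, v) =>
    let x := q + latticePoint (fun i => τ • b i) v
    (x, x + τ • b i, b i)

variable (b : OrthonormalBasis (Fin d) ℝ (EuclideanSpace ℝ (Fin d))) {τ : ℝ}

theorem gradientEstimate_observe_latticeAction (hτ : 0 < τ) (δ : ℝ)
    (f : EuclideanSpace ℝ (Fin d) → ℝ) (q : EuclideanSpace ℝ (Fin d))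
    (σ : Fin d × (Fin d → Fin N)) :
    gradientEstimate (observe δ f (latticeAction b τ q σ))
      = coordinateEstimate b τ f (q + latticePoint (fun i => τ • b i) σ.2) σ.1 := by
  simp only [gradientEstimate, observe, latticeAction, coordinateEstimate, add_sub_cancel_left,
    norm_smul, b.norm_eq_one, mul_one, Real.norm_of_nonneg hτ.le, smul_smul, Fintype.card_fin,
    fwdDiff]
  congr 1
  field_simp

theorem expect_loss_sub_inner_latticeAction_le [NeZero d] [NeZero N] (hτ : 0 < τ) {δ D : ℝ}
    {f : EuclideanSpace ℝ (Fin d) → ℝ} {G : ℝ≥0} (hf : ConvexOn ℝ Set.univ f)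
    (hG : LipschitzWith G f) {w y q : EuclideanSpace ℝ (Fin d)} (hwy : dist w y ≤ D)
    (hq : ∀ v : Fin d → Fin N, dist (q + latticePoint (fun i => τ • b i) v) w ≤ 1 / N * D) :
    𝔼 σ : Fin d × (Fin d → Fin N), (f (latticeAction b τ q σ).1 - f y
        - ⟪gradientEstimate (observe δ f (latticeAction b τ q σ)), w - y⟫)
      ≤ 3 * d * G * D / N := by
  simp only [gradientEstimate_observe_latticeAction b hτ]
  have hd : (1 : ℝ) ≤ d := by exact_mod_cast NeZero.one_le
  have hD : 0 ≤ D := dist_nonneg.trans hwy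
  calc _ ≤ G * (1 / N * D) + Fintype.card (Fin d) * (2 * G * dist w y / N) :=
        expect_loss_sub_inner_coordinateEstimate_le b hτ hf hG hq
    _ ≤ d * (G * (1 / N * D)) + d * (2 * G * D / N) := by
        rw [Fintype.card_fin]
        have : G * (1 / N * D) ≤ d * (G * (1 / N * D)) :=
          le_mul_of_one_le_left (by positivity) hd
        gcongr
    _ = 3 * d * G * D / N := by ring

end LatticeAction

theorem diam_pos_of_nonempty_interior {X : Type*} [MetricSpace X]
    [∀ x : X, (nhdsWithin x {x}ᶜ).NeBot] {K : Set X} (hint : (interior K).Nonempty)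
    (hbdd : Bornology.IsBounded K) : 0 < Metric.diam K := by
  obtain ⟨a, ha⟩ := hint
  exact Metric.diam_pos (infinite_of_mem_nhds a (mem_interior_iff_mem_nhds.1 ha)).nontrivial hbdd

theorem cast_card_Icc {R : Type*} [AddGroupWithOne R] {j s : ℕ} (hjs : j ≤ s) :
    (#(Icc j s) : R) = s - j + 1 := by
  rw [Nat.card_Icc, Nat.succ_sub hjs, Nat.cast_succ, Nat.cast_sub hjs]

theorem log_le_two_mul_log_sq {x : ℝ} (hx : 2 ≤ x) : Real.log x ≤ 2 * Real.log x ^ 2 := by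
  have : Real.log 2 ≤ Real.log x := Real.log_le_log two_pos hx
  nlinarith [Real.log_two_gt_d9]

theorem mul_bias_add_regret_le {M n T : ℝ} (hM : 0 ≤ M) (hT : 2 ≤ T) (hn : 0 ≤ n) (hnT : n ≤ T) :
    n * (3 * M / T) + M * √n * (4 * Real.log T + 6) ≤ 20 * M * √n * Real.log T := by
  have hbias : n / T ≤ √n := by
    have hsqrt : √n ≤ T := (Real.sqrt_le_left (by linarith)).2 (by nlinarith)
    rw [div_le_iff₀ (by linarith)]
    calc n = √n * √n := (Real.mul_self_sqrt hn).symm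
      _ ≤ √n * T := by gcongr
  have hlog : 9 ≤ 16 * Real.log T := by
    linarith [Real.log_two_gt_d9, Real.log_le_log two_pos hT]
  calc _ = M * (3 * (n / T) + √n * (4 * Real.log T + 6)) := by ring
    _ ≤ M * (3 * √n + √n * (4 * Real.log T + 6)) := by gcongr
    _ = M * √n * (4 * Real.log T + 9) := by ring
    _ ≤ M * √n * (4 * Real.log T + 16 * Real.log T) := by gcongr
    _ = _ := by ring

theorem bco_three_query_adaptive_regret_general {d T : ℕ} [NeZero d] {G : ℝ≥0}
    {K : Set (EuclideanSpace ℝ (Fin d))} (hT : 2 ≤ T) (hG : 0 < G) (hK : Convex ℝ K)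
    (hbdd : Bornology.IsBounded K) (hint : (interior K).Nonempty) :
    ∃ A : BCOAlg3 d K, ∀ (δ : ℝ) (ℓ : ℕ → EuclideanSpace ℝ (Fin d) → ℝ),
      (∀ t, ConvexOn ℝ Set.univ (ℓ t)) → (∀ t, LipschitzWith G (ℓ t)) →
      (∀ t, Integrable (fun ω => ℓ t (bcoPlay3 A δ ℓ t ω)) A.μ) ∧
      ∀ j s, j ≤ s → s < T → ∀ y ∈ K,
        (∑ t ∈ Icc j s, ∫ ω, ℓ t (bcoPlay3 A δ ℓ t ω) ∂A.μ) - ∑ t ∈ Icc j s, ℓ t y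
          ≤ 20 * d * G * Metric.diam K * √(#(Icc j s)) * Real.log T := by
  have : NeZero T := ⟨by omega⟩
  have hd : (0 : ℝ) < d := by exact_mod_cast Nat.pos_of_neZero d
  let b := EuclideanSpace.basisFun (Fin d) ℝ
  have hdiam : ∀ x ∈ closure K, ∀ y ∈ closure K, dist x y ≤ Metric.diam K := fun x hx y hy =>
    (Metric.dist_le_diam_of_mem hbdd.closure hx hy).trans_eq (Metric.diam_closure K)
  obtain ⟨W, hWK, hW⟩ := exists_strongly_adaptive_learner (L := d * (G : ℝ))
    (hint.mono (interior_subset.trans subset_closure)) isClosed_closure.isComplete hK.closure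
    hdiam (diam_pos_of_nonempty_interior hint hbdd) (by positivity) hT
  obtain ⟨τ, hτ, q, hq⟩ := exists_lattice_perturbation hK hbdd hint (ρ := 1 / T)
    ⟨by positivity, div_le_one_of_le₀ (by exact_mod_cast NeZero.one_le) (by positivity)⟩ b T
  let strategy (h : List (BCORecord d)) : Fin d × (Fin d → Fin T) → BCOAction d :=
    latticeAction b τ (q (W (h.map gradientEstimate)))
  refine ⟨seededAlg T strategy (fun _ σ => (hq _ (hWK _) σ.2).1) fun _ _ => b.norm_eq_one _,
    fun δ ℓ hℓ hlip => ⟨fun _ => integrable_seededAlg _, fun j s hjs hsT y hy => ?_⟩⟩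
  have hyK : y ∈ closure K := subset_closure hy
  have hest (t : ℕ) (h : List (BCORecord d)) (σ : Fin d × (Fin d → Fin T)) :
      ‖gradientEstimate (observe δ (ℓ t) (strategy h σ))‖ ≤ d * G := by
    simpa only [strategy, gradientEstimate_observe_latticeAction b hτ, Fintype.card_fin]
      using norm_coordinateEstimate_le b hτ (hlip t) _ _
  have hbias (t : ℕ) (h : List (BCORecord d)) : 𝔼 σ, (ℓ t (strategy h σ).1 - ℓ t y
      - ⟪gradientEstimate (observe δ (ℓ t) (strategy h σ)), W (h.map gradientEstimate) - y⟫)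
      ≤ 3 * d * G * Metric.diam K / T :=
    expect_loss_sub_inner_latticeAction_le b hτ (hℓ t) (hlip t) (hdiam _ (hWK _) y hyK)
      fun v => (hq _ (hWK _) v).2
  refine (seededAlg_expected_regret_le hsT hbias hest fun g hg =>
    hW g hg j s hjs hsT y hyK).trans ?_
  have hcard : #(Icc j s) ≤ T := by
    rw [Nat.card_Icc]
    omega
  have hfinal := mul_bias_add_regret_le (M := d * G * Metric.diam K) (by positivity)
    (Nat.ofNat_le_cast.2 hT) (Nat.cast_nonneg _) (Nat.cast_le.2 hcard)
  simpa only [mul_assoc, mul_left_comm (Metric.diam K)] using hfinal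

/-- Strongly adaptive regret for bandit convex optimization with three
queries per round.  There is a universal constant `c > 0` such that for every dimension
`d ≥ 1`, horizon `T ≥ 2`, and convex domain `K` with `r𝔹 ⊆ K ⊆ D𝔹` (condition number
`κ = D/r`), there is a randomized BCO algorithm that plays `x_t ∈ K` and queries two
additional points of the form `A(t)` and `A(t) + δ_t • u` with `δ_t = 1/(κ T)` and `u`
a unit vector, whose expected adaptive regret on every contiguous interval
`[j,s] ⊆ [T]` (rounds indexed `0, …, T−1`) against every comparator in `K` is at most
`c · d G D √|I| (log T)²`, for all convex, `G`-Lipschitz, nonnegative losses. -/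
theorem bco_three_query_adaptive_regret :
    ∃ c : ℝ, 0 < c ∧
      ∀ (d T : ℕ) (r D G : ℝ) (K : Set (EuclideanSpace ℝ (Fin d))),
        1 ≤ d → 2 ≤ T → 0 < r → r ≤ D → 0 < G →
        Convex ℝ K →
        Metric.closedBall (0 : EuclideanSpace ℝ (Fin d)) r ⊆ K →
        K ⊆ Metric.closedBall (0 : EuclideanSpace ℝ (Fin d)) D →
        ∃ A : BCOAlg3 d K,
          ∀ ℓ : ℕ → EuclideanSpace ℝ (Fin d) → ℝ,
            (∀ t, ConvexOn ℝ Set.univ (ℓ t)) →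
            (∀ t x y, |ℓ t x - ℓ t y| ≤ G * ‖x - y‖) →
            (∀ t x, 0 ≤ ℓ t x) →
            ∀ j s : ℕ, j ≤ s → s < T →
              (∀ t, Integrable (fun ω => ℓ t (bcoPlay3 A (1 / ((D / r) * T)) ℓ t ω)) A.μ) ∧
              ∀ y ∈ K,
                (∑ t ∈ Finset.Icc j s, ∫ ω, ℓ t (bcoPlay3 A (1 / ((D / r) * T)) ℓ t ω) ∂A.μ)
                  - ∑ t ∈ Finset.Icc j s, ℓ t y
                ≤ c * d * G * D * Real.sqrt ((s : ℝ) - j + 1) * Real.log T ^ 2 := by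
  refine ⟨80, by norm_num, fun d T r D G K hd hT hr hrD hG hK hrK hKD => ?_⟩
  have : NeZero d := ⟨by omega⟩
  have hD : 0 < D := hr.trans_le hrD
  lift G to ℝ≥0 using hG.le
  obtain ⟨A, hA⟩ := bco_three_query_adaptive_regret_general hT hG hK
    (Metric.isBounded_closedBall.subset hKD)
    ⟨0, interior_mono hrK (Metric.ball_subset_interior_closedBall (Metric.mem_ball_self hr))⟩
  refine ⟨A, fun ℓ hℓ hlip _ j s hjs hsT => ?_⟩
  obtain ⟨hintegrable, hregret⟩ := hA (1 / ((D / r) * T)) ℓ hℓ fun t =>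
    .of_dist_le_mul fun x y => by rw [Real.dist_eq, dist_eq_norm]; exact hlip t x y
  refine ⟨hintegrable, fun y hy => (hregret j s hjs hsT y hy).trans ?_⟩
  calc _ ≤ 20 * d * G * (2 * D) * √(#(Icc j s)) * (2 * Real.log T ^ 2) := by
        gcongr
        · exact (Metric.diam_mono hKD Metric.isBounded_closedBall).trans
            (Metric.diam_closedBall hD.le)
        · exact log_le_two_mul_log_sq (by exact_mod_cast hT)
    _ = _ := by
        rw [cast_card_Icc hjs]
        ring
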